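/- Let ℍ denote the hyperbolic upper half-plane with its hyperbolic distance dist, on which SL(2, ℝ) acts by Möbius transformations, and let i ∈ ℍ be the point with complex coordinate √−1. For t, θ ∈ ℝ let A(t) ∈ SL(2, ℝ) be the matrix with rows (e^{t/2}, 0) and (0, e^{−t/2}), and let R(θ) ∈ SL(2, ℝ) be the rotation matrix with rows (cos θ, −sin θ) and (sin θ, cos θ). Then for every ε > 0 there exists c > 1 such that for every g ∈ SL(2, ℝ) and every w ∈ ℍ, writing z = g•i: c⁻¹·exp(−dist(z, w)) ≤ (1/(2π))·∫₀^{2π} Leb({t ∈ [0, ∞) : dist((g·R(θ)·A(t))•i, w) < ε}) dθ ≤ c·exp(−dist(z, w)), where Leb denotes Lebesgue measure on ℝ. -/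

import Mathlib

open MeasureTheory UpperHalfPlane
open scoped ENNReal

/-- The diagonal one-parameter subgroup `A(t) = diag(e^{t/2}, e^{−t/2})` of `SL(2, ℝ)`. -/
noncomputable def Amat (t : ℝ) : Matrix.SpecialLinearGroup (Fin 2) ℝ :=
  ⟨!![Real.exp (t / 2), 0; 0, Real.exp (-(t / 2))], by
    simp [Matrix.det_fin_two_of, ← Real.exp_add]⟩

/-- The rotation `R(θ) ∈ SO(2) ⊆ SL(2, ℝ)`. -/
noncomputable def Rmat (θ : ℝ) : Matrix.SpecialLinearGroup (Fin 2) ℝ :=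
  ⟨!![Real.cos θ, -Real.sin θ; Real.sin θ, Real.cos θ], by
    rw [Matrix.det_fin_two_of]; ring_nf
    exact Real.cos_sq_add_sin_sq θ⟩

/-!
Put `d = dist (g • I) w`. The averaged Green function is invariant under `SL(2, ℝ)` on the left and
under rotations of `g` on the right, so by the polar decomposition of `ℍ` it may be computed for
`g = 1` and the point `w = A(d) • I`. A ray spends at most the time `2ε` in a ball of radius `ε`,
and at least the time `ε/2` if it comes within `ε/2` of the centre. Since rays from `I` have unit
speed, the ray in direction `R(θ)` comes close to `w` exactly when its point `R(θ) • w` at time `d`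
is close to `w`, and `sinh (dist (R(θ) • w) w / 2) = |sin θ| sinh d`. The directions which
contribute to the average are thus those with `|sin θ|` at most about `e^{-d}`, a set of measure
comparable to `e^{-d}`.
-/

section

open Metric Real Set
open scoped MatrixGroups ComplexConjugate

theorem sinh_dist_eq (z w : ℍ) :
    sinh (dist z w) = dist (z : ℂ) w * dist (z : ℂ) (conj (w : ℂ)) / (2 * (z.im * w.im)) := by
  have hzw : 0 < z.im * w.im := mul_pos z.im_pos w.im_pos
  have hsinh := sinh_two_mul (dist z w / 2)
  rw [mul_div_cancel₀ _ two_ne_zero, sinh_half_dist, cosh_half_dist] at hsinh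
  rw [hsinh]
  field_simp
  rw [sq_sqrt hzw.le]
  ring

theorem sinh_half_dist_smul_self (g : SL(2, ℝ)) (z : ℍ) :
    sinh (dist (g • z) z / 2) =
      ‖g 1 0 * (z : ℂ) ^ 2 + (g 1 1 - g 0 0) * z - g 0 1‖ / (2 * z.im) := by
  set D : ℂ := denom g z
  have hD_apply : D = g 1 0 * (z : ℂ) + g 1 1 := rfl
  have hD_ne : D ≠ 0 := denom_ne_zero g z
  have hdist : dist ((g • z : ℍ) : ℂ) z =
      ‖g 1 0 * (z : ℂ) ^ 2 + (g 1 1 - g 0 0) * z - g 0 1‖ / ‖D‖ := by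
    rw [dist_comm, Complex.dist_eq, ← norm_div, coe_specialLinearGroup_apply]
    simp only [Algebra.algebraMap_self, RingHom.id_apply]
    rw [← hD_apply, eq_div_of_mul_eq hD_ne (a := (z : ℂ) - _)]
    rw [sub_mul, div_mul_cancel₀ _ hD_ne, hD_apply]
    ring
  have him : (g • z).im = z.im / ‖D‖ ^ 2 := by
    have hGL : (g • z).im = _ := im_smul_eq_div_normSq (g : GL (Fin 2) ℝ) z
    simpa [Complex.normSq_eq_norm_sq] using hGL
  have hsqrt : √((g • z).im * z.im) = z.im / ‖D‖ := by
    rw [him, div_mul_eq_mul_div, ← sq, ← div_pow, sqrt_sq (by positivity)]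
  rw [sinh_half_dist, hdist, hsqrt]
  have := norm_ne_zero_iff.2 hD_ne
  field_simp

theorem Rmat_zero : Rmat 0 = 1 := by
  ext i j
  fin_cases i <;> fin_cases j <;> simp [Rmat]

theorem Rmat_pi : Rmat π = -1 := by
  ext i j
  fin_cases i <;> fin_cases j <;> simp [Rmat]

theorem Rmat_add (θ φ : ℝ) : Rmat (θ + φ) = Rmat θ * Rmat φ := by
  ext i j
  rw [Matrix.SpecialLinearGroup.coe_mul, Matrix.mul_apply, Fin.sum_univ_two]
  fin_cases i <;> fin_cases j <;> simp [Rmat, cos_add, sin_add] <;> ring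

theorem continuous_Rmat : Continuous Rmat := by
  refine Continuous.subtype_mk (continuous_matrix fun i j ↦ ?_) _
  fin_cases i <;> fin_cases j
  exacts [continuous_cos, continuous_sin.neg, continuous_sin, continuous_cos]

theorem specialLinearGroup_neg_smul (g : SL(2, ℝ)) (z : ℍ) : -g • z = g • z := by
  ext
  simp only [coe_specialLinearGroup_apply, Matrix.SpecialLinearGroup.coe_neg, Matrix.neg_apply,
    map_neg, Complex.ofReal_neg, neg_mul, ← neg_add, neg_div_neg_eq]

theorem Rmat_add_pi_smul (θ : ℝ) (z : ℍ) : Rmat (θ + π) • z = Rmat θ • z := by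
  rw [Rmat_add, Rmat_pi, mul_neg_one, specialLinearGroup_neg_smul]

theorem coe_Rmat_pi_div_two_smul (z : ℍ) : ((Rmat (π / 2) • z : ℍ) : ℂ) = -(z : ℂ)⁻¹ := by
  rw [coe_specialLinearGroup_apply]
  simp [Rmat, neg_div]

theorem sinh_half_dist_Rmat_smul_self (θ : ℝ) (z : ℍ) :
    sinh (dist (Rmat θ • z) z / 2) = |sin θ| * sinh (dist I z) := by
  have hnum : (Rmat θ 1 0 * (z : ℂ) ^ 2 + (Rmat θ 1 1 - Rmat θ 0 0) * z - Rmat θ 0 1 : ℂ) =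
      sin θ * ((z - I) * (z - conj (I : ℂ))) := by
    change (sin θ * (z : ℂ) ^ 2 + (cos θ - cos θ) * z - ((-sin θ : ℝ) : ℂ) : ℂ) =
      sin θ * ((z - Complex.I) * (z - conj Complex.I))
    rw [Complex.ofReal_neg, Complex.conj_I]
    linear_combination (sin θ : ℂ) * Complex.I_sq
  rw [sinh_half_dist_smul_self, hnum, dist_comm I, sinh_dist_eq, norm_mul, norm_mul,
    Complex.norm_real, Complex.dist_eq, Complex.dist_eq, I_im, mul_one, mul_div_assoc, norm_eq_abs]

theorem dist_Rmat_smul_self_le (θ : ℝ) (z : ℍ) :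
    dist (Rmat θ • z) z ≤ |sin θ| * exp (dist I z) := by
  have hself : dist (Rmat θ • z) z / 2 ≤ |sin θ| * sinh (dist I z) :=
    (self_le_sinh_iff.2 (by positivity)).trans_eq (sinh_half_dist_Rmat_smul_self θ z)
  have hexp : sinh (dist I z) ≤ exp (dist I z) / 2 := by
    rw [sinh_eq]
    linarith [exp_pos (-dist I z)]
  have := mul_le_mul_of_nonneg_left hexp (abs_nonneg (sin θ))
  linarith

theorem abs_sin_mul_exp_dist_le (θ : ℝ) (z : ℍ) :
    |sin θ| * exp (dist I z) ≤ 2 * sinh (dist (Rmat θ • z) z / 2) + 1 := by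
  have hexp : exp (dist I z) ≤ 2 * sinh (dist I z) + 1 := by
    rw [sinh_eq]
    linarith [exp_le_one_iff.2 (neg_nonpos.2 (dist_nonneg (x := I) (y := z)))]
  rw [sinh_half_dist_Rmat_smul_self]
  nlinarith [abs_nonneg (sin θ), abs_sin_le_one θ]

theorem Rmat_smul_I (θ : ℝ) : Rmat θ • I = I := by
  have hsinh := sinh_half_dist_Rmat_smul_self θ I
  rw [dist_self, sinh_zero, mul_zero, sinh_eq_zero] at hsinh
  exact dist_eq_zero.1 (by linarith)

theorem Amat_zero : Amat 0 = 1 := by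
  ext i j
  fin_cases i <;> fin_cases j <;> simp [Amat]

theorem coe_Amat_smul_I (t : ℝ) : ((Amat t • I : ℍ) : ℂ) = exp t * Complex.I := by
  have hexp : exp (t / 2) / exp (-(t / 2)) = exp t := by
    rw [← exp_sub]
    ring_nf
  rw [coe_specialLinearGroup_apply, ← hexp]
  simp [Amat, mul_div_right_comm]

theorem isometry_Amat_smul_I : Isometry fun t : ℝ ↦ Amat t • I := by
  convert isometry_vertical_line 0 using 2 with t
  ext
  rw [coe_Amat_smul_I]
  apply Complex.ext <;> simp [-Complex.ofReal_exp]

theorem dist_I_Amat_smul_I (t : ℝ) : dist I (Amat t • I) = |t| := by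
  simpa [Amat_zero] using isometry_Amat_smul_I.dist_eq 0 t

theorem Amat_log_im_smul_I {z : ℍ} (hz : z.re = 0) : Amat (log z.im) • I = z := by
  ext
  rw [coe_Amat_smul_I, exp_log z.im_pos]
  apply Complex.ext <;> simp [hz]

theorem Rmat_pi_div_two_smul_Amat_smul_I (t : ℝ) :
    Rmat (π / 2) • Amat t • I = Amat (-t) • I := by
  ext
  rw [coe_Rmat_pi_div_two_smul, coe_Amat_smul_I, coe_Amat_smul_I, exp_neg]
  simp [mul_comm]

-- `R(π/2)` acts by `z ↦ -1/z`, which reverses the sign of the real part.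
theorem exists_re_Rmat_smul_eq_zero (z : ℍ) : ∃ θ : ℝ, (Rmat θ • z).re = 0 := by
  have hcont : Continuous fun θ ↦ (Rmat θ • z).re :=
    continuous_re.comp (continuous_Rmat.smul continuous_const)
  have hzero : (Rmat 0 • z).re = z.re := by rw [Rmat_zero, one_smul]
  have hpi : (Rmat (π / 2) • z).re = -(z.re / Complex.normSq z) := by
    rw [← coe_re, coe_Rmat_pi_div_two_smul, Complex.neg_re, Complex.inv_re, coe_re]
  have hmem : (0 : ℝ) ∈ uIcc (Rmat 0 • z).re (Rmat (π / 2) • z).re := by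
    rw [mem_uIcc, hzero, hpi, neg_nonneg, neg_nonpos]
    have hnorm := Complex.normSq_nonneg (z : ℂ)
    rcases le_total z.re 0 with hre | hre
    · exact .inl ⟨hre, div_nonpos_of_nonpos_of_nonneg hre hnorm⟩
    · exact .inr ⟨div_nonneg hre hnorm, hre⟩
  obtain ⟨θ, -, hθ⟩ := intermediate_value_uIcc hcont.continuousOn hmem
  exact ⟨θ, hθ⟩

theorem exists_Rmat_smul_eq_Amat_dist_smul_I (z : ℍ) :
    ∃ θ : ℝ, Rmat θ • z = Amat (dist I z) • I := by
  obtain ⟨θ, t, ht⟩ : ∃ θ t, Rmat θ • z = Amat t • I := by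
    obtain ⟨θ, hθ⟩ := exists_re_Rmat_smul_eq_zero z
    exact ⟨θ, _, (Amat_log_im_smul_I hθ).symm⟩
  have hdist : dist I z = |t| := by
    rw [← dist_I_Amat_smul_I, ← ht, ← dist_smul (Rmat θ) I z, Rmat_smul_I]
  rcases abs_choice t with habs | habs <;> rw [hdist, habs]
  · exact ⟨θ, ht⟩
  · exact ⟨π / 2 + θ, by rw [Rmat_add, mul_smul, ht, Rmat_pi_div_two_smul_Amat_smul_I]⟩

/-- The Green function `G(g, S)` of the geodesic flow: the total time which the geodesic ray
`t ↦ (g * Amat t) • I`, `t ≥ 0`, spends in `S`. It takes values in `ℝ≥0∞`, being a Lebesgue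
measure, and `S` is not required to be measurable. -/
noncomputable def greenFunction (g : SL(2, ℝ)) (S : Set ℍ) : ℝ≥0∞ :=
  volume {t : ℝ | 0 ≤ t ∧ (g * Amat t) • I ∈ S}

theorem greenFunction_mul (h g : SL(2, ℝ)) (S : Set ℍ) :
    greenFunction (h * g) S = greenFunction g ((h • ·) ⁻¹' S) := by
  simp only [greenFunction, mem_preimage, mul_assoc, mul_smul]

theorem greenFunction_le_ediam (g : SL(2, ℝ)) (S : Set ℍ) : greenFunction g S ≤ ediam S := by
  have hiso : Isometry fun t : ℝ ↦ (g * Amat t) • I := by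
    simpa only [mul_smul, Function.comp_def] using (isometry_smul ℍ g).comp isometry_Amat_smul_I
  calc greenFunction g S ≤ ediam {t : ℝ | 0 ≤ t ∧ (g * Amat t) • I ∈ S} := volume_le_diam _
    _ = ediam ((fun t : ℝ ↦ (g * Amat t) • I) '' {t | 0 ≤ t ∧ (g * Amat t) • I ∈ S}) :=
      (hiso.ediam_image _).symm
    _ ≤ ediam S := ediam_mono (image_subset_iff.2 fun _ ht ↦ ht.2)

theorem greenFunction_ball_le (g : SL(2, ℝ)) (w : ℍ) (ε : ℝ) :
    greenFunction g (ball w ε) ≤ ENNReal.ofReal (2 * ε) := by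
  rw [ENNReal.ofReal_mul zero_le_two, ENNReal.ofReal_ofNat, ← eball_ofReal]
  exact (greenFunction_le_ediam _ _).trans ediam_eball_le

theorem ofReal_le_greenFunction_ball {g : SL(2, ℝ)} {w : ℍ} {d r ε : ℝ} (hd : 0 ≤ d)
    (h : dist ((g * Amat d) • I) w + r ≤ ε) :
    ENNReal.ofReal r ≤ greenFunction g (ball w ε) := by
  have hvol : volume (Ico d (d + r)) = ENNReal.ofReal r := by
    rw [volume_Ico, add_sub_cancel_left]
  rw [← hvol]
  refine measure_mono fun t ⟨hdt, htr⟩ ↦ ⟨hd.trans hdt, ?_⟩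
  have htime : dist ((g * Amat t) • I) ((g * Amat d) • I) = t - d := by
    rw [mul_smul, mul_smul, dist_smul, isometry_Amat_smul_I.dist_eq, Real.dist_eq,
      abs_of_nonneg (sub_nonneg.2 hdt)]
  calc dist ((g * Amat t) • I) w
      ≤ dist ((g * Amat t) • I) ((g * Amat d) • I) + dist ((g * Amat d) • I) w :=
        dist_triangle _ _ _
    _ < ε := by linarith

theorem dist_smul_self_lt_of_greenFunction_ne_zero {k : SL(2, ℝ)} (hk : k • I = I) {d ε : ℝ}
    (hd : 0 ≤ d) (h : greenFunction k (ball (Amat d • I) ε) ≠ 0) :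
    dist (k • Amat d • I) (Amat d • I) < 2 * ε := by
  obtain ⟨t, ht, htball⟩ := nonempty_of_measure_ne_zero h
  rw [mem_ball, mul_smul] at htball
  have hnorm : dist I (k • Amat t • I) = t := by
    nth_rw 1 [← hk]
    rw [dist_smul, dist_I_Amat_smul_I, abs_of_nonneg ht]
  have htime : dist (k • Amat d • I) (k • Amat t • I) < ε := by
    have hdiff := abs_dist_sub_le (k • Amat t • I) (Amat d • I) I
    rw [dist_comm _ I, hnorm, dist_comm _ I, dist_I_Amat_smul_I, abs_of_nonneg hd] at hdiff
    rw [dist_smul, isometry_Amat_smul_I.dist_eq, dist_comm, Real.dist_eq]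
    exact hdiff.trans_lt htball
  linarith [dist_triangle (k • Amat d • I) (k • Amat t • I) (Amat d • I)]

theorem periodic_greenFunction_mul_Rmat (g : SL(2, ℝ)) (S : Set ℍ) :
    Function.Periodic (fun θ ↦ greenFunction (g * Rmat θ) S) π := fun θ ↦ by
  simp only [greenFunction, mul_smul, Rmat_add_pi_smul]

theorem setLIntegral_Ioc_add_eq_of_periodic {f : ℝ → ℝ≥0∞} {T : ℝ} (hf : Function.Periodic f T)
    (hT : 0 < T) (a b : ℝ) : ∫⁻ x in Ioc a (a + T), f x = ∫⁻ x in Ioc b (b + T), f x :=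
  (isAddFundamentalDomain_Ioc hT a).setLIntegral_eq (isAddFundamentalDomain_Ioc hT b) f
    hf.map_vadd_zmultiples

theorem setLIntegral_Ioc_add_comp (f : ℝ → ℝ≥0∞) (a b c : ℝ) :
    ∫⁻ x in Ioc a b, f (c + x) = ∫⁻ x in Ioc (c + a) (c + b), f x := by
  have := (measurePreserving_add_left volume c).setLIntegral_comp_preimage_emb
    (MeasurableEquiv.addLeft c).measurableEmbedding f (Ioc (c + a) (c + b))
  simpa using this

/-- The average over `K = SO(2)` of the Green function `G(gk, S)`, the quantity to be estimated. As
`R(θ)` turns tangent vectors at `I` by the angle `2θ`, the interval `(0, 2π]` covers the unit circle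
of directions at `g • I` twice. -/
noncomputable def averagedGreen (g : SL(2, ℝ)) (S : Set ℍ) : ℝ≥0∞ :=
  ENNReal.ofReal (1 / (2 * π)) * ∫⁻ θ in Ioc 0 (2 * π), greenFunction (g * Rmat θ) S

theorem averagedGreen_mul (h g : SL(2, ℝ)) (S : Set ℍ) :
    averagedGreen (h * g) S = averagedGreen g ((h • ·) ⁻¹' S) := by
  simp only [averagedGreen, mul_assoc, greenFunction_mul h]

theorem averagedGreen_eq_setLIntegral_Ioc_pi (g : SL(2, ℝ)) (S : Set ℍ) (a : ℝ) :
    averagedGreen g S =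
      ENNReal.ofReal (1 / π) * ∫⁻ θ in Ioc a (a + π), greenFunction (g * Rmat θ) S := by
  have hper := setLIntegral_Ioc_add_eq_of_periodic (periodic_greenFunction_mul_Rmat g S) pi_pos
  have hunion : Ioc 0 (2 * π) = Ioc 0 (0 + π) ∪ Ioc π (π + π) := by
    rw [zero_add, ← two_mul, Ioc_union_Ioc_eq_Ioc pi_pos.le (by linarith [pi_pos])]
  have hdisj : Disjoint (Ioc 0 (0 + π)) (Ioc π (π + π)) := by
    rw [zero_add]; exact Ioc_disjoint_Ioc_of_le le_rfl
  rw [averagedGreen, hunion, lintegral_union measurableSet_Ioc hdisj, hper 0 a, hper π a,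
    ← two_mul, ← mul_assoc, ← ENNReal.ofReal_ofNat 2, ← ENNReal.ofReal_mul (by positivity)]
  congr 2
  field_simp

theorem averagedGreen_mul_Rmat (g : SL(2, ℝ)) (S : Set ℍ) (α : ℝ) :
    averagedGreen (g * Rmat α) S = averagedGreen g S := by
  rw [averagedGreen_eq_setLIntegral_Ioc_pi (g * Rmat α) S 0,
    averagedGreen_eq_setLIntegral_Ioc_pi g S (α + 0), add_assoc, ← setLIntegral_Ioc_add_comp]
  simp only [mul_assoc, Rmat_add]

theorem averagedGreen_mul_ball_smul (h g : SL(2, ℝ)) (w : ℍ) (ε : ℝ) :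
    averagedGreen (h * g) (ball (h • w) ε) = averagedGreen g (ball w ε) := by
  rw [averagedGreen_mul, preimage_smul_ball, inv_smul_smul]

theorem averagedGreen_ball (g : SL(2, ℝ)) (w : ℍ) (ε : ℝ) :
    averagedGreen g (ball w ε) = averagedGreen 1 (ball (Amat (dist (g • I) w) • I) ε) := by
  obtain ⟨θ, hθ⟩ := exists_Rmat_smul_eq_Amat_dist_smul_I (g⁻¹ • w)
  have hdist : dist I (g⁻¹ • w) = dist (g • I) w := by
    rw [← dist_smul g, smul_inv_smul]
  calc averagedGreen g (ball w ε)
      = averagedGreen (g * 1) (ball (g • g⁻¹ • w) ε) := by rw [mul_one, smul_inv_smul]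
    _ = averagedGreen 1 (ball (g⁻¹ • w) ε) := averagedGreen_mul_ball_smul _ _ _ _
    _ = averagedGreen (Rmat θ * 1) (ball (Rmat θ • g⁻¹ • w) ε) :=
      (averagedGreen_mul_ball_smul _ _ _ _).symm
    _ = averagedGreen (1 * Rmat θ) (ball (Amat (dist (g • I) w) • I) ε) := by
      rw [hθ, hdist, mul_one, one_mul]
    _ = averagedGreen 1 (ball (Amat (dist (g • I) w) • I) ε) := averagedGreen_mul_Rmat _ _ _

theorem ofReal_half_le_greenFunction_Rmat {d ε θ : ℝ} (hd : 0 ≤ d)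
    (hθ : |θ| ≤ ε / 2 * exp (-d)) :
    ENNReal.ofReal (ε / 2) ≤ greenFunction (Rmat θ) (ball (Amat d • I) ε) := by
  refine ofReal_le_greenFunction_ball hd ?_
  have hdist : dist ((Rmat θ * Amat d) • I) (Amat d • I) ≤ ε / 2 := calc
    _ ≤ |sin θ| * exp d := by
      simpa only [mul_smul, dist_I_Amat_smul_I, abs_of_nonneg hd] using
        dist_Rmat_smul_self_le θ (Amat d • I)
    _ ≤ ε / 2 * exp (-d) * exp d := by gcongr; exact abs_sin_le_abs.trans hθ
    _ = ε / 2 := by rw [mul_assoc, ← exp_add, neg_add_cancel, exp_zero, mul_one]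
  linarith

theorem abs_le_of_greenFunction_Rmat_ne_zero {d ε θ : ℝ} (hd : 0 ≤ d) (hθ : |θ| ≤ π / 2)
    (h : greenFunction (Rmat θ) (ball (Amat d • I) ε) ≠ 0) :
    |θ| ≤ π / 2 * (2 * sinh ε + 1) * exp (-d) := by
  have hdist := dist_smul_self_lt_of_greenFunction_ne_zero (Rmat_smul_I θ) hd h
  have hsin : |sin θ| * exp d ≤ 2 * sinh ε + 1 := by
    have hexp := abs_sin_mul_exp_dist_le θ (Amat d • I)
    rw [dist_I_Amat_smul_I, abs_of_nonneg hd] at hexp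
    have hsinh : sinh (dist (Rmat θ • Amat d • I) (Amat d • I) / 2) ≤ sinh ε :=
      sinh_le_sinh.2 (by linarith)
    linarith
  calc |θ| = π / 2 * (2 / π * |θ|) := by field_simp
    _ ≤ π / 2 * |sin θ| := by gcongr; exact mul_abs_le_abs_sin hθ
    _ = π / 2 * (|sin θ| * exp d) * exp (-d) := by
      rw [mul_assoc, mul_assoc |sin θ|, ← exp_add, add_neg_cancel, exp_zero, mul_one]
    _ ≤ π / 2 * (2 * sinh ε + 1) * exp (-d) := by gcongr

theorem le_averagedGreen_one_ball {d ε : ℝ} (hd : 0 ≤ d) (hε : 0 ≤ ε) :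
    ENNReal.ofReal (ε * min 1 (ε / 2) / π * exp (-d)) ≤
      averagedGreen 1 (ball (Amat d • I) ε) := by
  set δ := min 1 (ε / 2) * exp (-d) with hδ
  have hδ_le_one : δ ≤ 1 :=
    mul_le_one₀ (min_le_left _ _) (exp_pos _).le (exp_le_one_iff.2 (neg_nonpos.2 hd))
  have hsub : Icc (-δ) δ ⊆ Ioc (-(π / 2)) (-(π / 2) + π) := fun θ hθ ↦
    ⟨by linarith [hθ.1, pi_gt_three], by linarith [hθ.2, pi_gt_three]⟩
  have hgreen : ∀ θ ∈ Icc (-δ) δ,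
      ENNReal.ofReal (ε / 2) ≤ greenFunction (1 * Rmat θ) (ball (Amat d • I) ε) := by
    intro θ hθ
    rw [one_mul]
    refine ofReal_half_le_greenFunction_Rmat hd ((abs_le.2 hθ).trans ?_)
    exact mul_le_mul_of_nonneg_right (min_le_right _ _) (exp_pos _).le
  rw [averagedGreen_eq_setLIntegral_Ioc_pi 1 _ (-(π / 2))]
  calc ENNReal.ofReal (ε * min 1 (ε / 2) / π * exp (-d))
      = ENNReal.ofReal (1 / π) * ∫⁻ _ in Icc (-δ) δ, ENNReal.ofReal (ε / 2) := by
        rw [setLIntegral_const, volume_Icc, ← ENNReal.ofReal_mul (by positivity),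
          ← ENNReal.ofReal_mul (by positivity), hδ]
        congr 1
        ring
    _ ≤ ENNReal.ofReal (1 / π) *
          ∫⁻ θ in Icc (-δ) δ, greenFunction (1 * Rmat θ) (ball (Amat d • I) ε) := by
        gcongr 1
        exact setLIntegral_mono' measurableSet_Icc hgreen
    _ ≤ _ := by
        gcongr 1
        exact lintegral_mono_set hsub

theorem averagedGreen_one_ball_le {d ε : ℝ} (hd : 0 ≤ d) (hε : 0 ≤ ε) :
    averagedGreen 1 (ball (Amat d • I) ε) ≤
      ENNReal.ofReal (2 * ε * (2 * sinh ε + 1) * exp (-d)) := by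
  have := sinh_nonneg_iff.2 hε
  set δ := π / 2 * (2 * sinh ε + 1) * exp (-d) with hδ
  have hgreen : ∀ θ ∈ Ioc (-(π / 2)) (-(π / 2) + π),
      greenFunction (1 * Rmat θ) (ball (Amat d • I) ε) ≤
        (Icc (-δ) δ).indicator (fun _ ↦ ENNReal.ofReal (2 * ε)) θ := by
    intro θ hθ
    rw [one_mul]
    by_cases hmem : θ ∈ Icc (-δ) δ
    · rw [indicator_of_mem hmem]
      exact greenFunction_ball_le _ _ _
    · have hzero : greenFunction (Rmat θ) (ball (Amat d • I) ε) = 0 := by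
        have hθ_abs : |θ| ≤ π / 2 := abs_le.2 ⟨hθ.1.le, by linarith [hθ.2]⟩
        by_contra hne
        exact hmem (abs_le.1 (abs_le_of_greenFunction_Rmat_ne_zero hd hθ_abs hne))
      exact hzero.trans_le zero_le
  rw [averagedGreen_eq_setLIntegral_Ioc_pi 1 _ (-(π / 2))]
  calc _ ≤ ENNReal.ofReal (1 / π) *
          ∫⁻ θ, (Icc (-δ) δ).indicator (fun _ ↦ ENNReal.ofReal (2 * ε)) θ := by
        gcongr 1
        exact (setLIntegral_mono' measurableSet_Ioc hgreen).trans (setLIntegral_le_lintegral _ _)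
    _ = ENNReal.ofReal (2 * ε * (2 * sinh ε + 1) * exp (-d)) := by
        rw [lintegral_indicator_const measurableSet_Icc, volume_Icc,
          ← ENNReal.ofReal_mul (by positivity), ← ENNReal.ofReal_mul (by positivity), hδ]
        congr 1
        field_simp
        ring

end

/-- Lemma A.1 for `G = SL(2, ℝ)`: the `K`-average of the Green function of the geodesic flow
at `(z, B(w, ε))` is comparable to `e^{−dist(z, w)}`, uniformly in `z = g•i` and `w`. -/
theorem stmt9 (ε : ℝ) (hε : 0 < ε) :
    ∃ c : ℝ, 1 < c ∧
      ∀ (g : Matrix.SpecialLinearGroup (Fin 2) ℝ) (w : UpperHalfPlane),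
        (ENNReal.ofReal (c⁻¹ * Real.exp (-dist (g • UpperHalfPlane.I) w)) ≤
          ENNReal.ofReal (1 / (2 * Real.pi)) *
            (∫⁻ θ in Set.Ioc (0 : ℝ) (2 * Real.pi),
              volume {t : ℝ | 0 ≤ t ∧
                dist ((g * Rmat θ * Amat t) • UpperHalfPlane.I) w < ε})) ∧
        (ENNReal.ofReal (1 / (2 * Real.pi)) *
            (∫⁻ θ in Set.Ioc (0 : ℝ) (2 * Real.pi),
              volume {t : ℝ | 0 ≤ t ∧
                dist ((g * Rmat θ * Amat t) • UpperHalfPlane.I) w < ε}) ≤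
          ENNReal.ofReal (c * Real.exp (-dist (g • UpperHalfPlane.I) w))) := by
  set κ := ε * min 1 (ε / 2) / Real.pi with hκ
  set C := 2 * ε * (2 * Real.sinh ε + 1)
  have hκ_pos : 0 < κ := by positivity
  have hC_pos : 0 < C := by
    have := Real.sinh_pos_iff.2 hε
    positivity
  have hκ_inv_pos := inv_pos.2 hκ_pos
  refine ⟨1 + κ⁻¹ + C, by linarith, fun g w ↦ ?_⟩
  change _ ≤ averagedGreen g (Metric.ball w ε) ∧ averagedGreen g (Metric.ball w ε) ≤ _
  rw [averagedGreen_ball]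
  constructor
  · refine le_trans (ENNReal.ofReal_le_ofReal ?_) (le_averagedGreen_one_ball dist_nonneg hε.le)
    gcongr
    rw [← hκ, inv_le_comm₀ (by positivity) hκ_pos]
    linarith
  · refine (averagedGreen_one_ball_le dist_nonneg hε.le).trans (ENNReal.ofReal_le_ofReal ?_)
    gcongr
    linarith
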